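/- Let (X, W) be a strong left Frobenius pair in A. Then (W, X̂) is a cotorsion pair on the extension-closed subcategory Thick(X) = X̂ of A: Ext^1(W, Z) = 0 for all W ∈ W, Z ∈ X̂, and every C ∈ X̂ admits short exact sequences 0 → Z → W → C → 0 and 0 → C → Z' → W' → 0 with W, W' ∈ W and Z, Z' ∈ X̂. -/

import Mathlib

/-!
An object of `X` is a quotient of an object `W₀ ∈ W` with kernel in `X`. Applying this to the term
`X₀` of a resolution and pulling back, every `M ∈ X̂ₙ₊₁` becomes a quotient of an object of `W` with
kernel in `X̂ₙ`; this is one of the two sequences of the cotorsion pair, and the other one is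
`0 → M → M → 0 → 0`. The vanishing of `Ext¹(W, X̂)` is dimension shifting: `W^⊥` contains `X` and is
closed under cokernels of monomorphisms.

That `X̂ₙ` is closed under extensions is the horseshoe lemma: if `0 → A → B → D → 0` is exact and
`0 → D' → W₀ → D → 0` is a cover as above, then `W₀ → D` lifts to `B` because `Ext¹(W₀, A) = 0`, so
a cover `E` of `A` gives a cover `E ⊞ W₀` of `B` whose kernel is an extension of `D'` by the kernel
of `E → A`. Cokernels of monomorphisms and kernels of epimorphisms follow by pulling back. As for a
summand `A` of `A ⊞ B`, a cover `W₀ → A ⊞ B` has two components with kernels `K` and `L`, and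
`K ⊞ L` is the kernel of `W₀ ⊞ W₀ → A ⊞ B`, which shifts the question from `X̂ₙ₊₁` to `X̂ₙ`.
-/

open CategoryTheory CategoryTheory.Limits CategoryTheory.Abelian ZeroObject

universe w v u

namespace FrobeniusPaper

variable {C : Type u} [Category.{v} C] [Abelian C]

/-- `f, g` form a short exact sequence `0 → A → B → D → 0` in the abelian category `C`. -/
def IsSES {A B D : C} (f : A ⟶ B) (g : B ⟶ D) : Prop :=
  ∃ w : f ≫ g = 0, (ShortComplex.mk f g w).ShortExact

/-- A "subcategory" in the sense of the paper: a full additive subcategory, regarded as the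
predicate of membership for its objects, closed under isomorphisms and direct summands. -/
structure IsSubcat (X : C → Prop) : Prop where
  zero : X 0
  iso_closed : ∀ {A B : C}, (A ≅ B) → X A → X B
  biprod_closed : ∀ {A B : C}, X A → X B → X (A ⊞ B)
  summand_closed : ∀ {A M : C} (i : A ⟶ M) (p : M ⟶ A), i ≫ p = 𝟙 A → X M → X A

/-- `Hat X n M` means `M ∈ X̂ₙ`, i.e. there is an exact sequence
`0 → Xₙ → ⋯ → X₁ → X₀ → M → 0` with all `Xᵢ ∈ X`. -/
def Hat (X : C → Prop) : ℕ → C → Prop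
  | 0, M => X M
  | (n + 1), M => ∃ (K E : C) (f : K ⟶ E) (g : E ⟶ M), IsSES f g ∧ X E ∧ Hat X n K

/-- `M ∈ X̂ = ⋃ₙ X̂ₙ`. -/
def HatAll (X : C → Prop) (M : C) : Prop := ∃ n, Hat X n M

/-- `W` is a cogenerator for `X`. -/
def IsCogenerator (W X : C → Prop) : Prop :=
  (∀ M, W M → X M) ∧
    ∀ M, X M → ∃ (W₀ X' : C) (f : M ⟶ W₀) (g : W₀ ⟶ X'), IsSES f g ∧ W W₀ ∧ X X'

/-- `W` is a generator for `X`. -/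
def IsGenerator (W X : C → Prop) : Prop :=
  (∀ M, W M → X M) ∧
    ∀ M, X M → ∃ (X' W₀ : C) (f : X' ⟶ W₀) (g : W₀ ⟶ M), IsSES f g ∧ W W₀ ∧ X X'

/-- `X` is closed under extensions. -/
def ExtClosed (X : C → Prop) : Prop :=
  ∀ ⦃A B D : C⦄ (f : A ⟶ B) (g : B ⟶ D), IsSES f g → X A → X D → X B

/-- `X` is closed under kernels of epimorphisms. -/
def KerEpiClosed (X : C → Prop) : Prop :=
  ∀ ⦃A B D : C⦄ (f : A ⟶ B) (g : B ⟶ D), IsSES f g → X B → X D → X A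

/-- A thick subcategory: closed under direct summands and two-out-of-three for
short exact sequences. -/
def IsThickSub (T : C → Prop) : Prop :=
  IsSubcat T ∧ ∀ ⦃A B D : C⦄ (f : A ⟶ B) (g : B ⟶ D), IsSES f g →
    (T A → T B → T D) ∧ (T A → T D → T B) ∧ (T B → T D → T A)

/-- Membership in `Thick(X)`, the smallest thick subcategory containing `X`. -/
def thickClosure (X : C → Prop) (M : C) : Prop :=
  ∀ T : C → Prop, IsThickSub T → (∀ N, X N → T N) → T M

variable [HasExt.{w} C]

/-- `Y ∈ X^⊥`, i.e. `Extⁱ(M, Y) = 0` for all `i ≥ 1` and `M ∈ X`. -/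
def rightPerp (X : C → Prop) (Y : C) : Prop :=
  ∀ M, X M → ∀ i : ℕ, 1 ≤ i → Subsingleton (Abelian.Ext M Y i)

/-- A left Frobenius pair `(X, W)`. -/
structure LeftFrobenius (X W : C → Prop) : Prop where
  subX : IsSubcat X
  subW : IsSubcat W
  extClosed : ExtClosed X
  kerEpiClosed : KerEpiClosed X
  cogen : IsCogenerator W X
  perp : ∀ M, W M → rightPerp X M

/-- A strong left Frobenius pair `(X, W)`. -/
structure StrongLeftFrobenius (X W : C → Prop) extends LeftFrobenius X W : Prop where
  gen : IsGenerator W X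
  proj : ∀ M N, W M → X N → ∀ i : ℕ, 1 ≤ i → Subsingleton (Abelian.Ext M N i)

/-- A cotorsion pair `(U, V)` on an extension-closed subcategory `B` of `C`. -/
structure CotorsionPairOn (B U V : C → Prop) : Prop where
  subU : ∀ M, U M → B M
  subV : ∀ M, V M → B M
  isoU : ∀ {A B' : C}, (A ≅ B') → U A → U B'
  summandU : ∀ {A M : C} (i : A ⟶ M) (p : M ⟶ A), i ≫ p = 𝟙 A → U M → U A
  isoV : ∀ {A B' : C}, (A ≅ B') → V A → V B'
  summandV : ∀ {A M : C} (i : A ⟶ M) (p : M ⟶ A), i ≫ p = 𝟙 A → V M → V A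
  ext1 : ∀ M N, U M → V N → Subsingleton (Abelian.Ext M N 1)
  res : ∀ M, B M → ∃ (V₀ U₀ : C) (f : V₀ ⟶ U₀) (g : U₀ ⟶ M), IsSES f g ∧ U U₀ ∧ V V₀
  cores : ∀ M, B M → ∃ (V₀ U₀ : C) (f : M ⟶ V₀) (g : V₀ ⟶ U₀), IsSES f g ∧ U U₀ ∧ V V₀

section ShortExact

omit [HasExt.{w} C]

variable {A B D : C} {f : A ⟶ B} {g : B ⟶ D}

lemma IsSES.comp_eq_zero (h : IsSES f g) : f ≫ g = 0 := h.choose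

lemma IsSES.mono (h : IsSES f g) : Mono f := h.choose_spec.mono_f

lemma IsSES.epi (h : IsSES f g) : Epi g := h.choose_spec.epi_g

lemma IsSES.exists_lift (h : IsSES f g) {T : C} (k : T ⟶ B) (hk : k ≫ g = 0) :
    ∃ l : T ⟶ A, l ≫ f = k := by
  have := h.choose_spec.mono_f
  exact ⟨h.choose_spec.exact.lift k hk, h.choose_spec.exact.lift_f k hk⟩

lemma IsSES.exists_desc (h : IsSES f g) {T : C} (k : B ⟶ T) (hk : f ≫ k = 0) :
    ∃ l : D ⟶ T, g ≫ l = k := by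
  have := h.choose_spec.epi_g
  exact ⟨h.choose_spec.exact.desc k hk, h.choose_spec.exact.g_desc k hk⟩

lemma IsSES.of_exists_lift [Mono f] [Epi g] (w : f ≫ g = 0)
    (hl : ∀ {T : C} (k : T ⟶ B), k ≫ g = 0 → ∃ l : T ⟶ A, l ≫ f = k) : IsSES f g :=
  ⟨w,
    { exact := ShortComplex.exact_of_f_is_kernel _ <|
        KernelFork.IsLimit.ofι' _ _ fun k hk => ⟨(hl k hk).choose, (hl k hk).choose_spec⟩
      mono_f := ‹Mono f›
      epi_g := ‹Epi g› }⟩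

lemma isSES_kernel_ι (g : B ⟶ D) [Epi g] : IsSES (kernel.ι g) g :=
  ⟨kernel.condition g, { exact := ShortComplex.exact_kernel g }⟩

lemma isSES_zero_id (M : C) : IsSES (0 : 0 ⟶ M) (𝟙 M) :=
  ⟨zero_comp, (ShortComplex.Splitting.ofIsZeroOfIsIso _ (isZero_zero C)
    (inferInstanceAs (IsIso (𝟙 M)))).shortExact⟩

lemma isSES_id_zero (M : C) : IsSES (𝟙 M) (0 : M ⟶ 0) :=
  ⟨comp_zero, (ShortComplex.Splitting.ofIsIsoOfIsZero _ (inferInstanceAs (IsIso (𝟙 M)))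
    (isZero_zero C)).shortExact⟩

lemma isSES_biprod_inl_snd (A B : C) : IsSES (biprod.inl : A ⟶ A ⊞ B) biprod.snd :=
  ⟨_, (ShortComplex.Splitting.ofHasBinaryBiproduct A B).shortExact⟩

lemma IsSES.comp_iso (h : IsSES f g) {D' : C} (e : D ≅ D') : IsSES f (g ≫ e.hom) := by
  have := h.mono
  have := h.epi
  refine .of_exists_lift (by simp [reassoc_of% h.comp_eq_zero]) fun k hk => h.exists_lift k ?_
  simpa [← Category.assoc] using hk

lemma IsSES.biprod_map (h : IsSES f g) {A' B' D' : C} {f' : A' ⟶ B'} {g' : B' ⟶ D'}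
    (h' : IsSES f' g') : IsSES (biprod.map f f') (biprod.map g g') := by
  have := h.mono
  have := h.epi
  have := h'.mono
  have := h'.epi
  refine .of_exists_lift (by ext <;> simp [h.comp_eq_zero, h'.comp_eq_zero]) fun k hk => ?_
  obtain ⟨l, hl⟩ := h.exists_lift (k ≫ biprod.fst) (by simpa using hk =≫ biprod.fst)
  obtain ⟨l', hl'⟩ := h'.exists_lift (k ≫ biprod.snd) (by simpa using hk =≫ biprod.snd)
  exact ⟨biprod.lift l l', by ext <;> simp [hl, hl']⟩

lemma IsSES.biprod_map_id (h : IsSES f g) (E : C) :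
    IsSES (f ≫ biprod.inl) (biprod.map g (𝟙 E)) := by
  have := h.mono
  have := h.epi
  refine .of_exists_lift (by ext <;> simp [h.comp_eq_zero]) fun k hk => ?_
  have hsnd : k ≫ biprod.snd = 0 := by simpa using hk =≫ biprod.snd
  obtain ⟨l, hl⟩ := h.exists_lift (k ≫ biprod.fst) (by simpa using hk =≫ biprod.fst)
  exact ⟨l, by ext <;> simp [hl, hsnd]⟩

lemma IsSES.exists_of_isPullback (h : IsSES f g) {P E : C} {r : P ⟶ B} {q : P ⟶ E} {e : E ⟶ D}
    (sq : IsPullback r q g e) : ∃ i : A ⟶ P, IsSES i q := by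
  have := h.mono
  have := h.epi
  have hi : f ≫ g = 0 ≫ e := by rw [h.comp_eq_zero, zero_comp]
  have : Mono (sq.lift f 0 hi) := mono_of_mono_fac (sq.lift_fst f 0 hi)
  have : Epi q := Abelian.epi_snd_of_isLimit g e sq.isLimit
  refine ⟨sq.lift f 0 hi, .of_exists_lift (sq.lift_snd f 0 hi) fun k hk => ?_⟩
  obtain ⟨l, hl⟩ := h.exists_lift (k ≫ r) (by rw [Category.assoc, sq.w, reassoc_of% hk, zero_comp])
  exact ⟨l, sq.hom_ext (by simp [hl]) (by simp [hk])⟩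

lemma IsSES.exists_pullback (h : IsSES f g) {K E : C} {k : K ⟶ E} {e : E ⟶ D} (h' : IsSES k e) :
    ∃ (P : C) (i : A ⟶ P) (q : P ⟶ E) (j : K ⟶ P) (r : P ⟶ B), IsSES i q ∧ IsSES j r := by
  have sq := IsPullback.of_hasPullback g e
  obtain ⟨i, hi⟩ := h.exists_of_isPullback sq
  obtain ⟨j, hj⟩ := h'.exists_of_isPullback sq.flip
  exact ⟨_, i, _, j, _, hi, hj⟩

lemma IsSES.exists_comp (h : IsSES f g) {K E : C} {k : K ⟶ E} {e : E ⟶ B} (h' : IsSES k e) :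
    ∃ (Q : C) (i : K ⟶ Q) (q : Q ⟶ A) (j : Q ⟶ E), IsSES i q ∧ IsSES j (e ≫ g) := by
  have := h.mono
  have := h.epi
  have := h'.epi
  obtain ⟨i, hi⟩ := h'.exists_of_isPullback (IsPullback.of_hasPullback e f)
  refine ⟨_, i, _, pullback.fst e f, hi, .of_exists_lift ?_ fun l hl => ?_⟩
  · rw [pullback.condition_assoc, h.comp_eq_zero, comp_zero]
  · obtain ⟨m, hm⟩ := h.exists_lift (l ≫ e) (by simpa using hl)
    exact ⟨pullback.lift l m hm.symm, pullback.lift_fst _ _ _⟩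

lemma IsSES.exists_biprod_desc (h : IsSES f g) {K E : C} {k : K ⟶ E} {e : E ⟶ D}
    (h' : IsSES k e) {t : E ⟶ B} (ht : t ≫ g = e) :
    ∃ j : K ⟶ A ⊞ E, IsSES j (biprod.desc f t) := by
  have := h.mono
  have := h.epi
  have := h'.mono
  have := h'.epi
  obtain ⟨l, hl⟩ := h.exists_lift (k ≫ t) (by rw [Category.assoc, ht, h'.comp_eq_zero])
  have : Mono (biprod.lift (-l) k) := mono_of_mono_fac (biprod.lift_snd _ _)
  have : Epi (biprod.desc f t) := Preadditive.epi_of_cancel_zero _ fun u hu => by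
    have hfu : f ≫ u = 0 := by simpa using biprod.inl ≫= hu
    have htu : t ≫ u = 0 := by simpa using biprod.inr ≫= hu
    obtain ⟨v, rfl⟩ := h.exists_desc u hfu
    have hv : e ≫ v = 0 := by rwa [reassoc_of% ht] at htu
    rw [zero_of_epi_comp e hv, comp_zero]
  refine ⟨biprod.lift (-l) k, .of_exists_lift (by simp [hl]) fun x hx => ?_⟩
  have hx' : (x ≫ biprod.fst) ≫ f + (x ≫ biprod.snd) ≫ t = 0 := by
    simpa [biprod.desc_eq] using hx
  obtain ⟨m, hm⟩ := h'.exists_lift (x ≫ biprod.snd) (by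
    simpa [h.comp_eq_zero, ht] using hx' =≫ g)
  have hfst : m ≫ (-l) = x ≫ biprod.fst := by
    rw [← cancel_mono f, ← neg_eq_of_add_eq_zero_left hx', ← hm]
    simp [hl]
  exact ⟨m, by ext <;> simp [hm, hfst]⟩

lemma IsSES.exists_horseshoe (h : IsSES f g) {K E L F : C} {k : K ⟶ E} {e : E ⟶ A} {l : L ⟶ F}
    {p : F ⟶ D} (hA : IsSES k e) (hD : IsSES l p) {t : F ⟶ B} (ht : t ≫ g = p) :
    ∃ (Q : C) (i : K ⟶ Q) (q : Q ⟶ L) (j : Q ⟶ E ⊞ F) (r : E ⊞ F ⟶ B),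
      IsSES i q ∧ IsSES j r := by
  obtain ⟨j, hj⟩ := h.exists_biprod_desc hD ht
  obtain ⟨Q, i, q, j', hQ, hB⟩ := hj.exists_comp (hA.biprod_map_id F)
  exact ⟨Q, i, q, j', _, hQ, hB⟩

end ShortExact

/-- `T` is closed under cokernels of monomorphisms, the notion dual to `KerEpiClosed`. -/
def CokerMonoClosed (T : C → Prop) : Prop :=
  ∀ ⦃A B D : C⦄ (f : A ⟶ B) (g : B ⟶ D), IsSES f g → T A → T B → T D

lemma exists_lift_of_subsingleton_ext {A B D P : C} {f : A ⟶ B} {g : B ⟶ D} (h : IsSES f g)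
    (p : P ⟶ D) [Subsingleton (Abelian.Ext P A 1)] : ∃ t : P ⟶ B, t ≫ g = p := by
  obtain ⟨w, hw⟩ := h
  obtain ⟨x, hx⟩ := Ext.covariant_sequence_exact₃ P hw (Ext.mk₀ p) (zero_add 1)
    (Subsingleton.elim _ _)
  obtain ⟨t, rfl⟩ := (Ext.mk₀_bijective P B).surjective x
  exact ⟨t, (Ext.mk₀_bijective P D).injective (by simpa using hx)⟩

lemma rightPerp_cokerMonoClosed (W : C → Prop) : CokerMonoClosed (rightPerp W) := by
  rintro A B D f g ⟨w, hw⟩ hA hB M hM i hi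
  have : Subsingleton (Abelian.Ext M A (i + 1)) := hA M hM _ (by omega)
  have : Subsingleton (Abelian.Ext M B i) := hB M hM i hi
  refine subsingleton_of_forall_eq 0 fun x => ?_
  obtain ⟨y, rfl⟩ := Ext.covariant_sequence_exact₃ M hw x rfl (Subsingleton.elim _ _)
  rw [Subsingleton.elim y 0, Ext.zero_comp]

section Hat

omit [HasExt.{w} C]

variable {X W : C → Prop}

lemma Hat.succ (h0 : X 0) {n : ℕ} {M : C} (hM : Hat X n M) : Hat X (n + 1) M := by
  induction n generalizing M with
  | zero => exact ⟨0, M, _, _, isSES_zero_id M, hM, h0⟩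
  | succ n ih =>
    obtain ⟨K, E, k, e, h, hE, hK⟩ := hM
    exact ⟨K, E, k, e, h, hE, ih hK⟩

lemma hat_monotone (h0 : X 0) : Monotone (Hat X) :=
  monotone_nat_of_le_succ fun _ _ => Hat.succ h0

lemma Hat.of_iso (hX : IsSubcat X) {n : ℕ} {M N : C} (e : M ≅ N) (hM : Hat X n M) :
    Hat X n N := by
  cases n with
  | zero => exact hX.iso_closed e hM
  | succ n =>
    obtain ⟨K, E, k, p, h, hE, hK⟩ := hM
    exact ⟨K, E, k, _, h.comp_iso e, hE, hK⟩

lemma Hat.extension_of_mem (hExt : ExtClosed X) {n : ℕ} {A B D : C} {f : A ⟶ B} {g : B ⟶ D}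
    (hD : Hat X n D) (h : IsSES f g) (hA : X A) : Hat X n B := by
  cases n with
  | zero => exact hExt f g h hA hD
  | succ n =>
    obtain ⟨K, E, k, e, hE', hE, hK⟩ := hD
    obtain ⟨P, i, q, j, r, hP, hB⟩ := h.exists_pullback hE'
    exact ⟨K, P, j, r, hB, hExt i q hP hA hE, hK⟩

lemma Hat.kernel_of_mem (hKer : KerEpiClosed X) {n : ℕ} {A B D : C} {f : A ⟶ B} {g : B ⟶ D}
    (hB : Hat X n B) (h : IsSES f g) (hD : X D) : Hat X n A := by
  cases n with
  | zero => exact hKer f g h hB hD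
  | succ n =>
    obtain ⟨K, E, k, e, hE', hE, hK⟩ := hB
    obtain ⟨Q, i, q, j, hA, hQ⟩ := h.exists_comp hE'
    exact ⟨K, Q, i, q, hA, hKer j _ hQ hE hD, hK⟩

lemma Hat.exists_generator_cover (hExt : ExtClosed X) (hGen : IsGenerator W X) {n : ℕ} {M : C}
    (hM : Hat X (n + 1) M) :
    ∃ (K W₀ : C) (k : K ⟶ W₀) (e : W₀ ⟶ M), IsSES k e ∧ W W₀ ∧ Hat X n K := by
  obtain ⟨K, E, k, e, hM, hE, hK⟩ := hM
  obtain ⟨X', W₀, f, g, hE', hW₀, hX'⟩ := hGen.2 E hE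
  obtain ⟨Q, i, q, j, hQ, hM'⟩ := hM.exists_comp hE'
  exact ⟨Q, W₀, j, _, hM', hW₀, hK.extension_of_mem hExt hQ hX'⟩

lemma HatAll.of_isSES {K E M : C} {k : K ⟶ E} {e : E ⟶ M} (h : IsSES k e) (hE : X E)
    (hK : HatAll X K) : HatAll X M :=
  hK.imp' Nat.succ fun _ hn => ⟨K, E, k, e, h, hE, hn⟩

lemma HatAll.exists_isSES (h0 : X 0) {M : C} (hM : HatAll X M) :
    ∃ (K E : C) (k : K ⟶ E) (e : E ⟶ M), IsSES k e ∧ X E ∧ HatAll X K := by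
  obtain ⟨n, hM⟩ := hM
  obtain ⟨K, E, k, e, h, hE, hK⟩ := hM.succ h0
  exact ⟨K, E, k, e, h, hE, n, hK⟩

lemma HatAll.of_cokerMonoClosed {T : C → Prop} (hT : CokerMonoClosed T) (hX : ∀ M, X M → T M)
    {M : C} (hM : HatAll X M) : T M := by
  obtain ⟨n, hM⟩ := hM
  induction n generalizing M with
  | zero => exact hX M hM
  | succ n ih =>
    obtain ⟨K, E, k, e, h, hE, hK⟩ := hM
    exact hT k e h (ih hK) (hX E hE)

end Hat

section Thick

variable {X W : C → Prop}

lemma HatAll.subsingleton_ext_one (hPerp : ∀ M, X M → rightPerp W M) {W₀ M : C} (hW₀ : W W₀)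
    (hM : HatAll X M) : Subsingleton (Abelian.Ext W₀ M 1) :=
  hM.of_cokerMonoClosed (rightPerp_cokerMonoClosed W) hPerp W₀ hW₀ 1 le_rfl

lemma hat_extClosed (hExt : ExtClosed X) (hGen : IsGenerator W X)
    (hPerp : ∀ M, X M → rightPerp W M) (n : ℕ) : ExtClosed (Hat X n) := by
  induction n with
  | zero => exact hExt
  | succ n ih =>
    intro A B D f g h hA hD
    obtain ⟨L, W₀, l, p, hL, hW₀, hLn⟩ := hD.exists_generator_cover hExt hGen
    have := HatAll.subsingleton_ext_one hPerp hW₀ ⟨_, hA⟩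
    obtain ⟨t, ht⟩ := exists_lift_of_subsingleton_ext h p
    obtain ⟨K, E, k, e, hK, hE, hKn⟩ := hA
    obtain ⟨Q, i, q, j, r, hQ, hB⟩ := h.exists_horseshoe hK hL ht
    have hEW : X (E ⊞ W₀) := hExt _ _ (isSES_biprod_inl_snd E W₀) hE (hGen.1 W₀ hW₀)
    exact ⟨Q, E ⊞ W₀, j, r, hB, hEW, ih i q hQ hKn hLn⟩

lemma Hat.syzygy (h0 : X 0) (hExt : ExtClosed X) (hKer : KerEpiClosed X)
    (hGen : IsGenerator W X) (hPerp : ∀ M, X M → rightPerp W M) {n : ℕ} {K E M : C}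
    {k : K ⟶ E} {e : E ⟶ M} (h : IsSES k e) (hE : X E) (hM : Hat X (n + 1) M) : Hat X n K := by
  obtain ⟨L, W₀, l, p, hL, hW₀, hLn⟩ := hM.exists_generator_cover hExt hGen
  obtain ⟨P, i, q, j, r, hK, hP⟩ := h.exists_pullback hL
  have hPn : Hat X n P :=
    hat_extClosed hExt hGen hPerp n j r hP hLn (hat_monotone h0 (Nat.zero_le n) E hE)
  exact hPn.kernel_of_mem hKer hK (hGen.1 W₀ hW₀)

lemma Hat.of_biprod_left (hX : IsSubcat X) (hExt : ExtClosed X) (hKer : KerEpiClosed X)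
    (hGen : IsGenerator W X) (hPerp : ∀ M, X M → rightPerp W M) {n : ℕ} {A B : C}
    (hAB : Hat X n (A ⊞ B)) : Hat X n A := by
  induction n generalizing A B with
  | zero => exact hX.summand_closed biprod.inl biprod.fst biprod.inl_fst hAB
  | succ n ih =>
    obtain ⟨K, W₀, k, e, h, hW₀, -⟩ := hAB.exists_generator_cover hExt hGen
    have := h.epi
    have hA := isSES_kernel_ι (e ≫ biprod.fst)
    have hB := isSES_kernel_ι (e ≫ biprod.snd)
    have hXW₀ : X W₀ := hGen.1 W₀ hW₀
    have hker := Hat.syzygy hX.zero hExt hKer hGen hPerp (hA.biprod_map hB)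
      (hX.biprod_closed hXW₀ hXW₀) hAB
    exact ⟨_, W₀, _, _, hA, hXW₀, ih hker⟩

lemma Hat.of_retract (hX : IsSubcat X) (hExt : ExtClosed X) (hKer : KerEpiClosed X)
    (hGen : IsGenerator W X) (hPerp : ∀ M, X M → rightPerp W M) {n : ℕ} {A M : C}
    (i : A ⟶ M) (p : M ⟶ A) (hip : i ≫ p = 𝟙 A) (hM : Hat X n M) : Hat X n A := by
  let splitting := ShortComplex.Splitting.ofExactOfSection _ (ShortComplex.exact_kernel p) i hip
    (inferInstanceAs (Mono (kernel.ι p)))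
  let e : M ≅ A ⊞ kernel p := splitting.isoBinaryBiproduct ≪≫ biprod.braiding _ _
  exact (hM.of_iso hX e).of_biprod_left hX hExt hKer hGen hPerp

lemma hatAll_extClosed (h0 : X 0) (hExt : ExtClosed X) (hGen : IsGenerator W X)
    (hPerp : ∀ M, X M → rightPerp W M) : ExtClosed (HatAll X) := by
  rintro A B D f g h ⟨n, hA⟩ ⟨m, hD⟩
  exact ⟨max n m, hat_extClosed hExt hGen hPerp _ f g h
    (hat_monotone h0 (le_max_left n m) A hA) (hat_monotone h0 (le_max_right n m) D hD)⟩

lemma hatAll_cokerMonoClosed (h0 : X 0) (hExt : ExtClosed X) (hGen : IsGenerator W X)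
    (hPerp : ∀ M, X M → rightPerp W M) : CokerMonoClosed (HatAll X) := by
  intro A B D f g h hA hB
  obtain ⟨K, E, k, e, hB', hE, hK⟩ := hB.exists_isSES h0
  obtain ⟨Q, i, q, j, hQ, hD⟩ := h.exists_comp hB'
  exact .of_isSES hD hE (hatAll_extClosed h0 hExt hGen hPerp i q hQ hK hA)

lemma hatAll_kerEpiClosed (h0 : X 0) (hExt : ExtClosed X) (hKer : KerEpiClosed X)
    (hGen : IsGenerator W X) (hPerp : ∀ M, X M → rightPerp W M) : KerEpiClosed (HatAll X) := by
  intro A B D f g h hB hD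
  obtain ⟨K, E, k, e, hD', hE, hK⟩ := hD.exists_isSES h0
  obtain ⟨P, i, q, j, r, hA, hP⟩ := h.exists_pullback hD'
  exact (hatAll_extClosed h0 hExt hGen hPerp j r hP hK hB).imp fun _ hPn =>
    hPn.kernel_of_mem hKer hA hE

lemma isThickSub_hatAll (hX : IsSubcat X) (hExt : ExtClosed X) (hKer : KerEpiClosed X)
    (hGen : IsGenerator W X) (hPerp : ∀ M, X M → rightPerp W M) : IsThickSub (HatAll X) where
  left.zero := ⟨0, hX.zero⟩
  left.iso_closed e := Exists.imp fun _ => Hat.of_iso hX e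
  left.biprod_closed := hatAll_extClosed hX.zero hExt hGen hPerp _ _ (isSES_biprod_inl_snd _ _)
  left.summand_closed i p hip := Exists.imp fun _ => Hat.of_retract hX hExt hKer hGen hPerp i p hip
  right _ _ _ f g h :=
    ⟨hatAll_cokerMonoClosed hX.zero hExt hGen hPerp f g h,
      hatAll_extClosed hX.zero hExt hGen hPerp f g h,
      hatAll_kerEpiClosed hX.zero hExt hKer hGen hPerp f g h⟩

omit [HasExt.{w} C] in
lemma thickClosure_iff_hatAll (hT : IsThickSub (HatAll X)) (M : C) :
    thickClosure X M ↔ HatAll X M :=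
  ⟨fun hM => hM _ hT fun _ hN => ⟨0, hN⟩,
    fun hM _ hT' hXT => hM.of_cokerMonoClosed (fun _ _ _ f g h => (hT'.2 f g h).1) hXT⟩

end Thick

theorem statement12_general {X W : C → Prop} (hX : IsSubcat X) (hW : IsSubcat W)
    (hExt : ExtClosed X) (hKer : KerEpiClosed X) (hGen : IsGenerator W X)
    (hPerp : ∀ M, X M → rightPerp W M) :
    CotorsionPairOn (HatAll X) W (HatAll X) ∧ ∀ M, thickClosure X M ↔ HatAll X M := by
  have hThick : IsThickSub (HatAll X) := isThickSub_hatAll hX hExt hKer hGen hPerp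
  refine ⟨?_, thickClosure_iff_hatAll hThick⟩
  exact
    { subU M hM := ⟨0, hGen.1 M hM⟩
      subV _ := id
      isoU := hW.iso_closed
      summandU := hW.summand_closed
      isoV := hThick.1.iso_closed
      summandV := hThick.1.summand_closed
      ext1 _ _ hM hN := hN.subsingleton_ext_one hPerp hM
      res := by
        rintro M ⟨n, hM⟩
        obtain ⟨K, W₀, k, e, h, hW₀, hK⟩ := (hM.succ hX.zero).exists_generator_cover hExt hGen
        exact ⟨K, W₀, k, e, h, hW₀, n, hK⟩
      cores M hM := ⟨M, 0, 𝟙 M, 0, isSES_id_zero M, hW.zero, hM⟩ }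

/-- For a strong left Frobenius pair `(X, W)`, `(W, X̂)` is a cotorsion pair
on the extension-closed subcategory `Thick(X) = X̂` of `C`. -/
theorem statement12 {C : Type u} [Category.{v} C] [Abelian C]
    [EnoughProjectives C] [EnoughInjectives C] [HasExt.{w} C]
    (X W : C → Prop) (hF : StrongLeftFrobenius X W) :
    CotorsionPairOn (HatAll X) W (HatAll X) ∧ (∀ M, thickClosure X M ↔ HatAll X M) :=
  statement12_general hF.subX hF.subW hF.extClosed hF.kerEpiClosed hF.gen
    fun N hN M hM => hF.proj M N hM hN

end FrobeniusPaper
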